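/- Ramanujan identity for E6: for all τ ∈ ℍ, (1/(2πi)) · E6'(τ) = (E2(τ)·E6(τ) − E4(τ)²)/2, where E6' denotes the complex derivative of E6. -/

import Mathlib

/-!
With `D = (2πi)⁻¹ d/dτ`, differentiating the weight `6` transformation law of `E₆` produces an
extra term from the automorphy factor; the quasi-modularity of `E₂` makes `D E₆ - E₂ E₆ / 2`, the
Serre derivative of `E₆`, modular of weight `8`. At `i∞` the Eisenstein series tend to `1`, whereas
`D F(q) = q F'(q)` tends to `0`, so this modular form tends to `-1 / 2`, as does `-E₄² / 2`. Level
one modular forms of weight less than `12` are determined by their value at `i∞`, there being no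
nonzero cusp forms; hence the two forms are equal.
-/

/-- `q = exp(2πiτ)`. -/
noncomputable def qexp (τ : ℂ) : ℂ := Complex.exp (2 * Real.pi * Complex.I * τ)

/-- Divisor power sum `σ_k(n) = ∑_{d | n} d^k`, as a complex number. -/
noncomputable def sigmaC (k n : ℕ) : ℂ := ∑ d ∈ Nat.divisors n, (d : ℂ) ^ k

/-- Eisenstein series `E₂`. -/
noncomputable def E2 (τ : ℂ) : ℂ := 1 - 24 * ∑' n : ℕ, sigmaC 1 (n + 1) * qexp τ ^ (n + 1)

/-- Eisenstein series `E₄`. -/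
noncomputable def E4 (τ : ℂ) : ℂ := 1 + 240 * ∑' n : ℕ, sigmaC 3 (n + 1) * qexp τ ^ (n + 1)

/-- Eisenstein series `E₆`. -/
noncomputable def E6 (τ : ℂ) : ℂ := 1 - 504 * ∑' n : ℕ, sigmaC 5 (n + 1) * qexp τ ^ (n + 1)

/-- The discriminant form `Δ = (E₄³ - E₆²)/1728`. -/
noncomputable def Δfun (τ : ℂ) : ℂ := (E4 τ ^ 3 - E6 τ ^ 2) / 1728

/-- The ratio of quasi-periods `p(τ) = τ - 6i/(π E₂(τ))`. -/
noncomputable def pfun (τ : ℂ) : ℂ := τ - 6 * Complex.I / (Real.pi * E2 τ)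

open UpperHalfPlane Filter Topology ModularForm Derivative
open Function (Periodic)
open scoped Manifold MatrixGroups ArithmeticFunction.sigma

section Cusp

variable {f : ℍ → ℂ} {h : ℝ}

lemma norm_qParam_le_norm_qParam_of_im_le (hh : 0 < h) {z w : ℂ} (hzw : z.im ≤ w.im) :
    ‖Periodic.qParam h w‖ ≤ ‖Periodic.qParam h z‖ := by
  simp only [Periodic.norm_qParam, neg_mul]
  gcongr

lemma tendsto_atImInfty_of_hasSum_qExpansion {c : ℕ → ℂ} (hh : 0 < h)
    (hf : ∀ τ : ℍ, HasSum (fun m ↦ c m • Periodic.qParam h τ ^ m) (f τ)) :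
    Tendsto f atImInfty (𝓝 (c 0)) := by
  have hterm (m : ℕ) : Tendsto (fun τ : ℍ ↦ c m • Periodic.qParam h τ ^ m) atImInfty
      (𝓝 (c m • 0 ^ m)) :=
    ((qParam_tendsto_atImInfty hh).pow m).const_smul (c m)
  have hbound : ∀ᶠ τ : ℍ in atImInfty, ∀ m,
      ‖c m • Periodic.qParam h τ ^ m‖ ≤ ‖c m • Periodic.qParam h I ^ m‖ := by
    filter_upwards [atImInfty_basis.mem_of_mem (i := I.im) trivial] with τ hτ m
    simp only [norm_smul, norm_pow]
    gcongr
    exact norm_qParam_le_norm_qParam_of_im_le hh hτ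
  have hlim := tendsto_tsum_of_dominated_convergence (hf I).summable.norm hterm hbound
  have hzero : ∑' m, c m • (0 : ℂ) ^ m = c 0 := by
    rw [tsum_eq_single 0 fun m hm ↦ by rw [zero_pow hm, smul_zero], pow_zero, smul_eq_mul, mul_one]
  rw [hzero] at hlim
  exact hlim.congr fun τ ↦ (hf τ).tsum_eq

lemma hasDerivAt_qParam (h : ℝ) (w : ℂ) :
    HasDerivAt (Periodic.qParam h) (Periodic.qParam h w * (2 * Real.pi * Complex.I / h)) w := by
  have hexponent : HasDerivAt (fun z : ℂ ↦ 2 * Real.pi * Complex.I * z / h)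
      (2 * Real.pi * Complex.I / h) w := by
    simpa only [mul_one] using! ((hasDerivAt_id w).const_mul (2 * Real.pi * Complex.I)).div_const h
  exact hexponent.cexp

lemma normalizedDerivOfComplex_eq_qParam_mul_deriv_cuspFunction (hh : 0 < h)
    (hper : Periodic (f ∘ ofComplex) h) (hhol : MDiff f) (hbdd : IsBoundedAtImInfty f) (z : ℍ) :
    normalizedDerivOfComplex f z =
      (h : ℂ)⁻¹ * (Periodic.qParam h z * deriv (cuspFunction h f) (Periodic.qParam h z)) := by
  have hF := (differentiableAt_cuspFunction hh hper hhol hbdd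
    (Periodic.norm_qParam_lt_one hh z.im_pos)).hasDerivAt
  have hf_eq : f ∘ ofComplex = cuspFunction h f ∘ Periodic.qParam h :=
    funext fun w ↦ (Periodic.eq_cuspFunction hh.ne' hper w).symm
  rw [normalizedDerivOfComplex, hf_eq, (hF.comp (z : ℂ) (hasDerivAt_qParam h z)).deriv]
  field [Complex.two_pi_I_ne_zero]

lemma tendsto_normalizedDerivOfComplex_atImInfty (hh : 0 < h)
    (hper : Periodic (f ∘ ofComplex) h) (hhol : MDiff f) (hbdd : IsBoundedAtImInfty f) :
    Tendsto (normalizedDerivOfComplex f) atImInfty (𝓝 0) := by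
  have hq := qParam_tendsto_atImInfty hh
  have hF := (analyticAt_cuspFunction_zero hh hper hhol hbdd).deriv.continuousAt.tendsto
  rw [funext (normalizedDerivOfComplex_eq_qParam_mul_deriv_cuspFunction hh hper hhol hbdd)]
  simpa only [Function.comp_def, zero_mul, mul_zero] using (hq.mul (hF.comp hq)).const_mul (h : ℂ)⁻¹

lemma tendsto_E2_atImInfty : Tendsto EisensteinSeries.E2 atImInfty (𝓝 1) := by
  refine tendsto_atImInfty_of_hasSum_qExpansion
    (c := fun m ↦ if m = 0 then 1 else -24 * σ 1 m) one_pos fun τ ↦ ?_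
  simpa only [Periodic.qParam, Complex.ofReal_one, div_one] using
    EisensteinSeries.hasSum_qExpansion_E2 (z := τ)

lemma tendsto_serreDerivative_atImInfty {a : ℂ} (k : ℂ) (hh : 0 < h)
    (hper : Periodic (f ∘ ofComplex) h) (hhol : MDiff f) (hf : Tendsto f atImInfty (𝓝 a)) :
    Tendsto (serreDerivative k f) atImInfty (𝓝 (-(k / 12) * a)) := by
  have hD := tendsto_normalizedDerivOfComplex_atImInfty hh hper hhol (hf.isBigO_one ℝ)
  have hE := (tendsto_E2_atImInfty.const_mul (k * 12⁻¹)).mul hf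
  exact (hD.sub hE).trans_eq (by congr 1; ring)

end Cusp

section LevelOne

variable {k : ℤ}

lemma tendsto_atImInfty_qExpansion_coeff_zero (f : ModularForm 𝒮ℒ k) :
    Tendsto f atImInfty (𝓝 ((qExpansion 1 f).coeff 0)) :=
  tendsto_atImInfty_of_hasSum_qExpansion one_pos
    (ModularForm.hasSum_qExpansion f one_pos one_mem_strictPeriods_SL)

lemma tendsto_E_atImInfty {k : ℕ} (hk : 3 ≤ k) (hk2 : Even k) :
    Tendsto (E hk) atImInfty (𝓝 1) :=
  EisensteinSeries.E_qExpansion_coeff_zero hk hk2 ▸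
    tendsto_atImInfty_qExpansion_coeff_zero (E hk)

lemma tendsto_serreDerivative_modularForm_atImInfty (f : ModularForm 𝒮ℒ k) {a : ℂ}
    (hf : Tendsto f atImInfty (𝓝 a)) :
    Tendsto (serreDerivative k f) atImInfty (𝓝 (-(k / 12) * a)) :=
  tendsto_serreDerivative_atImInfty k one_pos
    (SlashInvariantFormClass.periodic_comp_ofComplex f one_mem_strictPeriods_SL) f.holo' hf

lemma serreDerivative_modularForm_slash (f : ModularForm 𝒮ℒ k) (γ : SL(2, ℤ)) :
    serreDerivative k f ∣[k + 2] γ = serreDerivative k f :=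
  serreDerivative_slash_invariant f.holo' (f.slash_action_eq' _ ⟨γ, rfl⟩)

/-- The Serre derivative `D f - (k / 12) E₂ f` of a level one modular form `f` of weight `k`, as a
modular form of weight `k + 2`. -/
noncomputable def serreDerivativeModularForm (f : ModularForm 𝒮ℒ k) : ModularForm 𝒮ℒ (k + 2) where
  toFun := serreDerivative k f
  slash_action_eq' := fun _ ⟨γ, hγ⟩ ↦ hγ ▸ serreDerivative_modularForm_slash f γ
  holo' := serreDerivative_mdifferentiable k f.holo'
  bdd_at_cusps' hc := by
    rw [OnePoint.isBoundedAt_iff_forall_SL2Z hc]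
    intro γ _
    rw [serreDerivative_modularForm_slash f γ]
    exact (tendsto_serreDerivative_modularForm_atImInfty f
      (tendsto_atImInfty_qExpansion_coeff_zero f)).isBigO_one ℝ

lemma eq_zero_of_isZeroAtImInfty_of_weight_lt_twelve (hk : k < 12) (f : ModularForm 𝒮ℒ k)
    (hf : IsZeroAtImInfty f) : f = 0 := by
  have hcoeff : (qExpansion 1 f).coeff 0 = 0 :=
    tendsto_nhds_unique (tendsto_atImInfty_qExpansion_coeff_zero f) hf
  have hcusp : toCuspForm f hcoeff = 0 :=
    rank_zero_iff_forall_zero.mp (CuspForm.rank_eq_zero_of_weight_lt_twelve hk) _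
  ext z
  exact DFunLike.congr_fun hcusp z

lemma eq_of_tendsto_atImInfty_of_weight_lt_twelve (hk : k < 12) {f g : ModularForm 𝒮ℒ k} {a : ℂ}
    (hf : Tendsto f atImInfty (𝓝 a)) (hg : Tendsto g atImInfty (𝓝 a)) : f = g :=
  sub_eq_zero.mp <| eq_zero_of_isZeroAtImInfty_of_weight_lt_twelve hk (f - g) <|
    (hf.sub hg).trans_eq (by rw [sub_self])

lemma serreDerivativeModularForm_E₆ :
    serreDerivativeModularForm E₆ = (-1 / 2 : ℂ) • (E₄.mul E₄) := by
  refine eq_of_tendsto_atImInfty_of_weight_lt_twelve (a := -1 / 2) (by norm_num) ?_ ?_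
  · have h6 : Tendsto E₆ atImInfty (𝓝 1) := tendsto_E_atImInfty _ ⟨3, rfl⟩
    exact (tendsto_serreDerivative_modularForm_atImInfty E₆ h6).trans_eq (by norm_num)
  · have h4 : Tendsto E₄ atImInfty (𝓝 1) := tendsto_E_atImInfty _ ⟨2, rfl⟩
    exact ((h4.mul h4).const_mul (-1 / 2 : ℂ)).trans_eq (by norm_num)

lemma normalizedDerivOfComplex_E₆ (z : ℍ) :
    normalizedDerivOfComplex E₆ z = (EisensteinSeries.E2 z * E₆ z - E₄ z ^ 2) / 2 := by
  have hz : normalizedDerivOfComplex E₆ z - (6 : ℤ) * 12⁻¹ * EisensteinSeries.E2 z * E₆ z =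
      -1 / 2 * (E₄ z * E₄ z) := DFunLike.congr_fun serreDerivativeModularForm_E₆ z
  push_cast at hz
  linear_combination hz

end LevelOne

section QSeries

lemma sigmaC_eq_sigma (k n : ℕ) : sigmaC k n = σ k n := by
  simp [sigmaC, ArithmeticFunction.sigma_apply]

lemma tsum_sigmaC_mul_qexp_pow (k : ℕ) (τ : ℂ) :
    ∑' n : ℕ, sigmaC k (n + 1) * qexp τ ^ (n + 1) =
      ∑' n : ℕ+, (σ k n : ℂ) * Complex.exp (2 * Real.pi * Complex.I * τ) ^ (n : ℕ) := by
  simp only [sigmaC_eq_sigma, qexp]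
  exact (tsum_pnat_eq_tsum_succ
    (f := fun n : ℕ ↦ (σ k n : ℂ) * Complex.exp (2 * Real.pi * Complex.I * τ) ^ n)).symm

lemma E_eq_one_sub_tsum_sigmaC {k : ℕ} (hk : 3 ≤ k) (hk2 : Even k) (z : ℍ) :
    E hk z = 1 - 2 * k / bernoulli k * ∑' n : ℕ, sigmaC (k - 1) (n + 1) * qexp z ^ (n + 1) := by
  rw [tsum_sigmaC_mul_qexp_pow]
  exact_mod_cast EisensteinSeries.q_expansion_bernoulli hk hk2 z

lemma E2_coe (z : ℍ) : E2 z = EisensteinSeries.E2 z := by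
  rw [E2, tsum_sigmaC_mul_qexp_pow, EisensteinSeries.E2_eq_tsum_cexp]

lemma E4_coe (z : ℍ) : E4 z = E₄ z := by
  rw [E4, E_eq_one_sub_tsum_sigmaC _ ⟨2, rfl⟩]
  norm_num [show bernoulli 4 = -1 / 30 by decide +kernel]

lemma E6_coe (z : ℍ) : E6 z = E₆ z := by
  rw [E6, E_eq_one_sub_tsum_sigmaC _ ⟨3, rfl⟩]
  norm_num [show bernoulli 6 = 1 / 42 by decide +kernel]

end QSeries

lemma hasDerivAt_of_forall_coe_eq {f : ℍ → ℂ} {g : ℂ → ℂ} (hf : MDiff f)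
    (hg : ∀ z : ℍ, g z = f z) (z : ℍ) :
    HasDerivAt g (2 * Real.pi * Complex.I * normalizedDerivOfComplex f z) z := by
  have hg_eq : g =ᶠ[𝓝 (z : ℂ)] f ∘ ofComplex := by
    filter_upwards [isOpen_upperHalfPlaneSet.mem_nhds z.im_pos] with w hw
    rw [Function.comp_apply, ofComplex_apply_of_im_pos hw, ← hg]
  rw [normalizedDerivOfComplex, mul_inv_cancel_left₀ Complex.two_pi_I_ne_zero]
  exact (mdifferentiableAt_iff.mp (hf z)).hasDerivAt.congr_of_eventuallyEq hg_eq

/-- Ramanujan's identity `(1/(2πi)) E₆' = (E₂E₆ - E₄²)/2`. -/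
theorem ramanujan_E6 (τ : ℂ) (hτ : 0 < τ.im) :
    HasDerivAt E6 (2 * Real.pi * Complex.I * ((E2 τ * E6 τ - E4 τ ^ 2) / 2)) τ := by
  lift τ to ℍ using hτ
  rw [E2_coe, E4_coe, E6_coe, ← normalizedDerivOfComplex_E₆]
  exact hasDerivAt_of_forall_coe_eq E₆.holo' E6_coe τ
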